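/- There exist T > 0 and an infinitely differentiable function f : ℝ → ℝ such that f(t) = e^{-t} for all t ≤ -T, f(t) = 1 + e^{-t} for all t ≥ 0, and for every t ∈ ℝ the four conditions hold: (a) f(t) > 1; (b) f'(t) < 0; (c) f''(t) > 0; (d) 1 - f(t)·f'(t) > (1 + f'(t)/f(t))². -/

import Mathlib

open Real Filter Topology in
lemma aux_zero (x : ℝ) (hx : x < 0 ∨ 1 < x) :
    deriv smoothTransition x = 0 ∧ deriv (deriv smoothTransition) x = 0 := by
  have key : ∃ c : ℝ, smoothTransition =ᶠ[𝓝 x] fun _ => c := by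
    rcases hx with hx | hx
    · refine ⟨0, ?_⟩
      filter_upwards [Iio_mem_nhds hx] with y hy
      exact smoothTransition.zero_of_nonpos (le_of_lt hy)
    · refine ⟨1, ?_⟩
      filter_upwards [Ioi_mem_nhds hx] with y hy
      exact smoothTransition.one_of_one_le (le_of_lt hy)
  obtain ⟨c, hc⟩ := key
  have h1 := hc.deriv
  refine ⟨by simpa using h1.eq_of_nhds, by simpa using h1.deriv_eq⟩

open Real in
lemma aux_bound : ∃ C : ℝ, 0 ≤ C ∧ ∀ x, |deriv smoothTransition x| ≤ C ∧
    |deriv (deriv smoothTransition) x| ≤ C := by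
  have hS : ContDiff ℝ 2 smoothTransition := smoothTransition.contDiff (n := 2)
  have hS1 : ContDiff ℝ 1 (deriv smoothTransition) :=
    (contDiff_succ_iff_deriv (n := 1).mp (by simpa [one_add_one_eq_two] using hS)).2.2
  obtain ⟨C1, h1⟩ := (isCompact_Icc (a := (0:ℝ)) (b := 1)).exists_bound_of_continuousOn
    hS1.continuous.continuousOn
  obtain ⟨C2, h2⟩ := (isCompact_Icc (a := (0:ℝ)) (b := 1)).exists_bound_of_continuousOn
    (hS1.continuous_deriv le_rfl).continuousOn
  refine ⟨max 0 (max C1 C2), le_max_left _ _, fun x => ?_⟩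
  by_cases hx : x ∈ Set.Icc (0:ℝ) 1
  · exact ⟨(h1 x hx).trans (by simp), (h2 x hx).trans (by simp)⟩
  · have : x < 0 ∨ 1 < x := by
      by_contra! h
      exact hx ⟨h.1, h.2⟩
    obtain ⟨a, b⟩ := aux_zero x this
    simp [a, b]

/-- There is a smooth interpolation `f` between `e^{-t}` (for `t ≤ -T`) and `1 + e^{-t}`
(for `t ≥ 0`) satisfying the four conditions (a)–(d) for every `t`. -/
theorem exists_smooth_interpolation :
    ∃ T : ℝ, T > 0 ∧ ∃ f : ℝ → ℝ, ContDiff ℝ (⊤ : ℕ∞) f ∧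
      (∀ t ≤ -T, f t = Real.exp (-t)) ∧
      (∀ t ≥ (0 : ℝ), f t = 1 + Real.exp (-t)) ∧
      ∀ t : ℝ,
        f t > 1 ∧
        deriv f t < 0 ∧
        deriv (deriv f) t > 0 ∧
        1 - f t * deriv f t > (1 + deriv f t / f t) ^ 2 := by
  obtain ⟨C, hC0, hC⟩ := aux_bound
  have hS : ContDiff ℝ 2 Real.smoothTransition := Real.smoothTransition.contDiff (n := 2)
  have hS1 : ContDiff ℝ 1 (deriv Real.smoothTransition) :=
    (contDiff_succ_iff_deriv (n := 1).mp (by simpa [one_add_one_eq_two] using hS)).2.2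
  have hT : 0 < C + 1 := by linarith
  set T := C + 1 with hTdef
  have hlin : ∀ t : ℝ, HasDerivAt (fun t : ℝ => 1 + t / T) (1 / T) t := fun t =>
    ((hasDerivAt_id t).div_const T).const_add 1
  have hexp : ∀ t : ℝ, HasDerivAt (fun t : ℝ => Real.exp (-t)) (-Real.exp (-t)) t := fun t => by
    simpa using (hasDerivAt_id t).neg.exp
  have hd1 : deriv (fun t => Real.exp (-t) + Real.smoothTransition (1 + t / T)) =
      fun t => -Real.exp (-t) + deriv Real.smoothTransition (1 + t / T) * (1 / T) := by
    funext t
    have h := ((hS.differentiable (by norm_num)) (1 + t / T)).hasDerivAt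
    exact ((hexp t).add (h.comp t (hlin t))).deriv
  have hd2 : ∀ t, deriv (fun t => -Real.exp (-t) +
      deriv Real.smoothTransition (1 + t / T) * (1 / T)) t =
      Real.exp (-t) + deriv (deriv Real.smoothTransition) (1 + t / T) * (1 / T) * (1 / T) := by
    intro t
    have h := ((hS1.differentiable (by norm_num)) (1 + t / T)).hasDerivAt
    have := ((hexp t).neg.add ((h.comp t (hlin t)).mul_const (1 / T))).deriv
    rw [neg_neg] at this
    exact this
  have hTi : 1 / T ≤ 1 := by rw [div_le_one hT]; linarith
  have hTi0 : 0 < 1 / T := by positivity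
  have hCT : C * (1 / T) < 1 := by rw [mul_one_div, div_lt_one hT]; linarith
  refine ⟨T, hT, fun t => Real.exp (-t) + Real.smoothTransition (1 + t / T), ?_, ?_, ?_, ?_⟩
  · exact (Real.contDiff_exp.comp contDiff_neg).add
      (Real.smoothTransition.contDiff.comp (contDiff_const.add (contDiff_id.div_const T)))
  · intro t ht
    have : t / T ≤ -1 := by rw [div_le_iff₀ hT]; linarith
    simp [Real.smoothTransition.zero_of_nonpos (show 1 + t / T ≤ 0 by linarith)]
  · intro t ht
    have : 0 ≤ t / T := by positivity
    simp only [Real.smoothTransition.one_of_one_le (show 1 ≤ 1 + t / T by linarith)]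
    ring
  intro t
  rw [hd1, hd2]
  have he := Real.exp_pos (-t)
  have hnn := Real.smoothTransition.nonneg (1 + t / T)
  have hb : |deriv Real.smoothTransition (1 + t / T) * (1 / T)| < 1 ∧
      |deriv (deriv Real.smoothTransition) (1 + t / T) * (1 / T) * (1 / T)| < 1 := by
    obtain ⟨a, b⟩ := hC (1 + t / T)
    have b' : |deriv (deriv Real.smoothTransition) (1 + t / T)| * (1 / T) < 1 :=
      (mul_le_mul_of_nonneg_right b hTi0.le).trans_lt hCT
    rw [abs_mul, abs_mul, abs_mul, abs_of_pos hTi0]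
    refine ⟨(mul_le_mul_of_nonneg_right a hTi0.le).trans_lt hCT, ?_⟩
    exact (mul_le_of_le_one_right (by positivity) hTi).trans_lt b'
  have hz : 0 < t → deriv Real.smoothTransition (1 + t / T) = 0 ∧
      deriv (deriv Real.smoothTransition) (1 + t / T) = 0 ∧
      Real.smoothTransition (1 + t / T) = 1 := by
    intro ht
    have : 0 < t / T := by positivity
    obtain ⟨a, b⟩ := aux_zero (1 + t / T) (Or.inr (by linarith))
    exact ⟨a, b, Real.smoothTransition.one_of_one_le (by linarith)⟩
  have main : ∃ e s p q : ℝ, e = Real.exp (-t) ∧ s = Real.smoothTransition (1 + t / T) ∧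
      p = deriv Real.smoothTransition (1 + t / T) * (1 / T) ∧
      q = deriv (deriv Real.smoothTransition) (1 + t / T) * (1 / T) * (1 / T) := ⟨_, _, _, _, rfl, rfl, rfl, rfl⟩
  obtain ⟨e, s, p, q, h1, h2, h3, h4⟩ := main
  have facts : 1 < e + s ∧ p < e ∧ -q < e ∧ e - p < 2 * (e + s) := by
    rcases lt_or_ge 0 t with ht | ht
    · obtain ⟨a, b, c⟩ := hz ht
      rw [a, zero_mul] at h3
      rw [b, zero_mul, zero_mul] at h4
      rw [c] at h2
      rw [← h1] at he
      subst h2 h3 h4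
      refine ⟨?_, ?_, ?_, ?_⟩ <;> linarith
    · rw [← h3, ← h4, abs_lt, abs_lt] at hb
      have : 1 ≤ e := by rw [h1]; exact Real.one_le_exp (by linarith)
      rw [← h2] at hnn
      have hs : 1 < e + s := by
        rcases ht.lt_or_eq with h | h
        · have : 1 < e := by rw [h1]; exact Real.one_lt_exp_iff.mpr (by linarith)
          linarith
        · have : s = 1 := by rw [h2, h]; simp
          linarith
      refine ⟨hs, ?_, ?_, ?_⟩ <;> linarith [hb.1.1, hb.1.2, hb.2.1, hb.2.2]
  beta_reduce
  rw [← h1, ← h2, ← h3, ← h4]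
  obtain ⟨f1, f2, f3, f4⟩ := facts
  refine ⟨f1, by linarith, by linarith, ?_⟩
  generalize hF : e + s = F at *
  have hP : -e + p = -(e - p) := by ring
  rw [hP]
  have hP0 : 0 < e - p := by linarith
  generalize e - p = P at *
  have hF0 : 0 < F := by linarith
  have hx : P / F < 2 := by rw [div_lt_iff₀ hF0]; linarith
  have hx0 : 0 < P / F := by positivity
  have : 0 < F * P := by positivity
  rw [neg_div]
  nlinarith [mul_pos hx0 (sub_pos.mpr hx)]
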